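/- Let ρ = |ψ⟩⟨ψ| be an n-qubit pure state and S ⊆ Fin n nonempty with |S| = s, and let P(q) = tr(ρ |Φ̃_q⟩⟨Φ̃_q|), q ∈ {1,2,3,4}^S, be the product SIC-POVM outcome distribution. Fix ε > 0 and δ ∈ (0,1), set N_B = ⌈8 log(1/δ)⌉ and B = ⌈4·3^s/ε²⌉, and let Q₁, …, Q_{2 N_B B} be i.i.d. with distribution P. For each batch b ∈ {1,…,N_B}, define C̄^(b) = 1 − 3^s · (1/B) Σ_{i=(b−1)B+1}^{bB} 1{Q_{2i−1} = Q_{2i}}. Then P( |median(C̄^(1), …, C̄^(N_B)) − C_ψ(S)| ≥ ε ) ≤ δ. -/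

import Mathlib

open Matrix MeasureTheory
open scoped BigOperators ComplexConjugate Kronecker

/-- `n`-qubit operators: matrices indexed by functions `Fin n → Fin 2`. -/
abbrev QMat (n : ℕ) : Type := Matrix (Fin n → Fin 2) (Fin n → Fin 2) ℂ

/-- Combine an assignment on `α` and one on its complement into a full index. -/
noncomputable def embedIdx {n : ℕ} (α : Finset (Fin n)) (i : {x : Fin n // x ∈ α} → Fin 2)
    (k : {x : Fin n // x ∉ α} → Fin 2) : Fin n → Fin 2 :=
  fun x => if h : x ∈ α then i ⟨x, h⟩ else k ⟨x, h⟩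

/-- The reduced density matrix on the qubits in `α` (partial trace over the rest). -/
noncomputable def reduced {n : ℕ} (ρ : QMat n) (α : Finset (Fin n)) :
    Matrix ({x : Fin n // x ∈ α} → Fin 2) ({x : Fin n // x ∈ α} → Fin 2) ℂ :=
  fun i j => ∑ k : ({x : Fin n // x ∉ α} → Fin 2), ρ (embedIdx α i k) (embedIdx α j k)

/-- The concentratable entanglement `C_ψ(S) = 1 - 2^{-|S|} ∑_{α ⊆ S} tr(ρ_α²)`. -/
noncomputable def CE {n : ℕ} (ρ : QMat n) (S : Finset (Fin n)) : ℝ :=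
  1 - (1 / 2 : ℝ) ^ S.card *
    ∑ α ∈ S.powerset, (Matrix.trace (reduced ρ α * reduced ρ α)).re

/-- Tensor product of single-qubit operators on the qubits in `S`, identity elsewhere. -/
noncomputable def localOp {n : ℕ} (S : Finset (Fin n))
    (V : {i : Fin n // i ∈ S} → Matrix (Fin 2) (Fin 2) ℂ) : QMat n :=
  fun x y => ∏ i : Fin n,
    if h : i ∈ S then V ⟨i, h⟩ (x i) (y i)
    else (if x i = y i then 1 else 0)

/-- The four SIC vectors `φ₁, …, φ₄` in `ℂ²`. -/
noncomputable def sicVec : Fin 4 → Fin 2 → ℂ :=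
  ![![1, 0],
    ![((1 / Real.sqrt 3 : ℝ) : ℂ), ((Real.sqrt (2/3) : ℝ) : ℂ)],
    ![((1 / Real.sqrt 3 : ℝ) : ℂ),
      ((Real.sqrt (2/3) : ℝ) : ℂ) * Complex.exp (2 * Real.pi * Complex.I / 3)],
    ![((1 / Real.sqrt 3 : ℝ) : ℂ),
      ((Real.sqrt (2/3) : ℝ) : ℂ) * Complex.exp (4 * Real.pi * Complex.I / 3)]]

/-- The rescaled SIC-POVM vectors `φ̃ᵢ = φᵢ/√2`. -/
noncomputable def sicTilde (i : Fin 4) : Fin 2 → ℂ :=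
  fun a => sicVec i a / ((Real.sqrt 2 : ℝ) : ℂ)

/-- The product SIC-POVM element `|Φ̃_q⟩⟨Φ̃_q| = ⊗_{i∈S} |φ̃_{qᵢ}⟩⟨φ̃_{qᵢ}|` on the qubits
in `S`, identity elsewhere. -/
noncomputable def sicProj {n : ℕ} (S : Finset (Fin n))
    (q : {i : Fin n // i ∈ S} → Fin 4) : QMat n :=
  localOp S (fun i => Matrix.vecMulVec (sicTilde (q i)) (star (sicTilde (q i))))

/-- The SIC-POVM outcome probability `P(q) = tr(ρ |Φ̃_q⟩⟨Φ̃_q|)`. -/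
noncomputable def sicBorn {n : ℕ} (ρ : QMat n) (S : Finset (Fin n))
    (q : {i : Fin n // i ∈ S} → Fin 4) : ℝ :=
  (Matrix.trace (ρ * sicProj S q)).re

/-- The product SIC-POVM outcome distribution, as a measure on `{1,2,3,4}^S`. -/
noncomputable def sicMeasure {n : ℕ} (ρ : QMat n) (S : Finset (Fin n)) :
    Measure ({i : Fin n // i ∈ S} → Fin 4) :=
  ∑ q : ({i : Fin n // i ∈ S} → Fin 4), ENNReal.ofReal (sicBorn ρ S q) • Measure.dirac q

/-- `m₀` is a median of `x₁, …, x_m`: at least half of the `xᵢ` satisfy `xᵢ ≤ m₀` and at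
least half satisfy `xᵢ ≥ m₀`. -/
def IsMedian {m : ℕ} (x : Fin m → ℝ) (m₀ : ℝ) : Prop :=
  m ≤ 2 * (Finset.univ.filter fun i => x i ≤ m₀).card ∧
  m ≤ 2 * (Finset.univ.filter fun i => m₀ ≤ x i).card

theorem sum_prod_weight_mul_sq {X ι : Type*} [Fintype X] [Fintype ι] [DecidableEq ι]
    (u f : X → ℝ) (hu : ∑ a, u a = 1) (hf : ∑ a, u a * f a = 0) :
    ∑ η : ι → X, (∏ k, u (η k)) * (∑ i, f (η i)) ^ 2
      = Fintype.card ι * ∑ a, u a * f a ^ 2 := by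
  have key : ∀ i j : ι, ∑ η : ι → X, (∏ k, u (η k)) * (f (η i) * f (η j))
      = if i = j then ∑ a, u a * f a ^ 2 else 0 := by
    intro i j
    have h1 : ∀ η : ι → X, (∏ k, u (η k)) * (f (η i) * f (η j))
        = ∏ k, (u (η k) * ((if k = i then f (η k) else 1) * (if k = j then f (η k) else 1))) := by
      intro η
      rw [Finset.prod_mul_distrib, Finset.prod_mul_distrib]
      simp only [Finset.prod_ite_eq', Finset.mem_univ, if_true]
    simp_rw [h1]
    rw [← Fintype.prod_sum
      (fun k a => u a * ((if k = i then f a else 1) * (if k = j then f a else 1)))]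
    split_ifs with hij
    · subst hij
      rw [Finset.prod_eq_single i]
      · simp [sq]
      · intro k _ hk
        simp [hk, hu]
      · simp
    · apply Finset.prod_eq_zero (Finset.mem_univ i)
      simpa [hij] using hf
  simp_rw [sq (∑ i, f _), Finset.sum_mul_sum, Finset.mul_sum]
  rw [Finset.sum_comm]
  have : ∀ i : ι, ∑ η : ι → X, ∑ j, (∏ k, u (η k)) * (f (η i) * f (η j))
      = ∑ a, u a * f a ^ 2 := by
    intro i
    rw [Finset.sum_comm]
    simp [key]
  simp_rw [this]
  simp [Finset.mul_sum]

theorem sum_prod_curry {X ι κ : Type*} [Fintype X] [Fintype ι] [Fintype κ]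
    [DecidableEq ι] [DecidableEq κ] (P : X → ℝ) (F : (ι → κ → X) → ℝ) :
    ∑ ω : ι × κ → X, (∏ i, P (ω i)) * F (fun b k => ω (b, k))
      = ∑ η : ι → κ → X, (∏ b, ∏ k, P (η b k)) * F η := by
  refine Fintype.sum_equiv (Equiv.curry ι κ X) _ _ fun ω => ?_
  rw [Fintype.prod_prod_type]
  rfl

/-- The collision estimator `1 - D · (1/B) ∑ 1{η(i,0) = η(i,1)}` of one batch. -/
noncomputable def collisionEstimate {X : Type*} [DecidableEq X] {B : ℕ} (D : ℝ)
    (η : Fin B × Fin 2 → X) : ℝ :=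
  1 - D * ((1 / (B : ℝ)) * ∑ i : Fin B, if η (i, 0) = η (i, 1) then 1 else 0)

theorem collisionEstimate_variance {X : Type*} [Fintype X] [DecidableEq X] {B : ℕ}
    (hB : 0 < B) (P : X → ℝ) (hP1 : ∑ q, P q = 1) (D : ℝ) :
    ∑ η : Fin B × Fin 2 → X, (∏ k, P (η k)) *
        (collisionEstimate D η - (1 - D * ∑ q, P q ^ 2)) ^ 2
      = D ^ 2 / B * (∑ q, P q ^ 2 - (∑ q, P q ^ 2) ^ 2) := by
  set p := ∑ q, P q ^ 2 with hp
  have hB' : (B : ℝ) ≠ 0 := by positivity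
  let u : (Fin 2 → X) → ℝ := fun z => ∏ j, P (z j)
  let e : (Fin 2 → X) → ℝ := fun z => if z 0 = z 1 then 1 else 0
  have hu : ∑ z, u z = 1 := by
    simp only [u]
    rw [← Fintype.prod_sum (fun _ a => P a)]
    simp [hP1]
  have hue : ∑ z, u z * e z = p := by
    rw [Fintype.sum_equiv (finTwoArrowEquiv X) _
      (fun z : X × X => P z.1 * P z.2 * if z.1 = z.2 then 1 else 0)
      (fun z => by simp [u, e, Fin.prod_univ_two])]
    rw [Fintype.sum_prod_type]
    simp [hp, sq]
  have he2 : ∀ z, e z ^ 2 = e z := by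
    intro z
    simp only [e]
    split_ifs <;> norm_num
  have h0 : ∑ z, u z * (e z - p) = 0 := by
    simp_rw [mul_sub, Finset.sum_sub_distrib, ← Finset.sum_mul, hue, hu]
    ring
  have hvar : ∑ z, u z * (e z - p) ^ 2 = p - p ^ 2 := by
    have : ∀ z, u z * (e z - p) ^ 2 = (1 - 2 * p) * (u z * e z) + p ^ 2 * u z := by
      intro z
      linear_combination u z * he2 z
    simp_rw [this, Finset.sum_add_distrib, ← Finset.mul_sum, hue, hu]
    ring
  have hmain := sum_prod_weight_mul_sq (ι := Fin B) u (fun z => e z - p) hu h0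
  rw [hvar] at hmain
  have hpt : ∀ η : Fin B × Fin 2 → X,
      (collisionEstimate D η - (1 - D * p)) ^ 2
        = (D / B) ^ 2 * (∑ i : Fin B, (e (fun j => η (i, j)) - p)) ^ 2 := by
    intro η
    rw [← mul_pow, ← neg_sq]
    congr 1
    simp only [collisionEstimate, Finset.sum_sub_distrib, e, Finset.sum_const, Finset.card_univ,
      Fintype.card_fin, nsmul_eq_mul]
    field_simp
    ring
  simp_rw [hpt]
  rw [sum_prod_curry P (fun η : Fin B → Fin 2 → X =>
    (D / B) ^ 2 * (∑ i : Fin B, (e (η i) - p)) ^ 2)]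
  simp_rw [mul_left_comm _ ((D / (B : ℝ)) ^ 2), ← Finset.mul_sum]
  simp only [u] at hmain
  rw [hmain, Fintype.card_fin]
  field_simp

theorem collisionEstimate_chebyshev {X : Type*} [Fintype X] [DecidableEq X] {B : ℕ}
    (P : X → ℝ) (hP0 : ∀ q, 0 ≤ P q) (hP1 : ∑ q, P q = 1) (D : ℝ) (hD : 0 < D)
    (hDP : D * ∑ q, P q ^ 2 ≤ 1) (ε : ℝ) (hε : 0 < ε) (hB : 4 * D / ε ^ 2 ≤ B) :
    ∑ η : Fin B × Fin 2 → X, (∏ k, P (η k)) *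
        (if ε ≤ |collisionEstimate D η - (1 - D * ∑ q, P q ^ 2)| then 1 else 0) ≤ 1 / 4 := by
  have hBpos : (0 : ℝ) < B := lt_of_lt_of_le (by positivity) hB
  have hvar := collisionEstimate_variance (Nat.cast_pos.mp hBpos) P hP1 D
  set p := ∑ q, P q ^ 2 with hp
  have hpp : 0 ≤ p := Finset.sum_nonneg fun _ _ => sq_nonneg _
  have hle : ∑ η : Fin B × Fin 2 → X, (∏ k, P (η k)) *
        (if ε ≤ |collisionEstimate D η - (1 - D * p)| then 1 else 0)
      ≤ ∑ η : Fin B × Fin 2 → X, (1 / ε ^ 2) * ((∏ k, P (η k)) *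
        (collisionEstimate D η - (1 - D * p)) ^ 2) := by
    refine Finset.sum_le_sum fun η _ => ?_
    rw [mul_left_comm]
    refine mul_le_mul_of_nonneg_left ?_ (Finset.prod_nonneg fun _ _ => hP0 _)
    split_ifs with h
    · rw [one_div_mul_eq_div, one_le_div (by positivity), ← sq_abs (collisionEstimate D η - _)]
      gcongr
    · positivity
  refine hle.trans ?_
  rw [← Finset.mul_sum, hvar, one_div_mul_eq_div, div_le_iff₀ (by positivity)]
  rw [div_le_iff₀ (by positivity)] at hB
  have h1 : D ^ 2 * (p - p ^ 2) ≤ D := by nlinarith [sq_nonneg (D * p)]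
  rw [div_mul_eq_mul_div, div_le_iff₀ hBpos]
  linarith

theorem IsMedian.card_le {m : ℕ} {x : Fin m → ℝ} {m₀ c ε : ℝ} (h : IsMedian x m₀)
    (hc : ε ≤ |m₀ - c|) : m ≤ 2 * (Finset.univ.filter fun i => ε ≤ |x i - c|).card := by
  rcases le_abs.mp hc with h1 | h1
  · refine h.2.trans (Nat.mul_le_mul_left 2 (Finset.card_le_card fun i hi => ?_))
    simp only [Finset.mem_filter, Finset.mem_univ, true_and] at hi ⊢
    exact le_abs.mpr (Or.inl (by linarith))
  · refine h.1.trans (Nat.mul_le_mul_left 2 (Finset.card_le_card fun i hi => ?_))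
    simp only [Finset.mem_filter, Finset.mem_univ, true_and] at hi ⊢
    exact le_abs.mpr (Or.inr (by linarith))

open Classical in
/-- Chernoff bound: among `N` independent trials of failure probability at most `1/4`, at least
half fail with probability at most `exp (-N/8)`. -/
theorem sum_prod_majority_le {Y : Type*} [Fintype Y] (N : ℕ) (W : Y → ℝ)
    (hW0 : ∀ y, 0 ≤ W y) (hW1 : ∑ y, W y = 1) (bad : Y → Prop)
    (hbad : ∑ y, W y * (if bad y then 1 else 0) ≤ 1 / 4) :
    ∑ η : Fin N → Y, (∏ b, W (η b)) *
        (if N ≤ 2 * (Finset.univ.filter fun b => bad (η b)).card then 1 else 0)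
      ≤ Real.exp (-(N / 8)) := by
  let r : ℝ := Real.sqrt 3
  have hr : 0 < r := by positivity
  have hr1 : 1 ≤ r := Real.one_le_sqrt.mpr (by norm_num)
  have hr2 : r ^ 2 = 3 := Real.sq_sqrt (by norm_num)
  let g : Y → ℝ := fun y => if bad y then r else r⁻¹
  have hg0 : ∀ y, 0 ≤ g y := fun y => by simp only [g]; split_ifs <;> positivity
  have hpt : ∀ η : Fin N → Y,
      (if N ≤ 2 * (Finset.univ.filter fun b => bad (η b)).card then (1 : ℝ) else 0)
        ≤ ∏ b, g (η b) := by
    intro η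
    split_ifs with h
    · simp only [g]
      rw [Finset.prod_ite, Finset.prod_const, Finset.prod_const, inv_pow, ← div_eq_mul_inv,
        one_le_div (by positivity)]
      refine pow_le_pow_right₀ hr1 ?_
      have := Finset.card_filter_add_card_filter_not (s := (Finset.univ : Finset (Fin N)))
        (fun b => bad (η b))
      simp only [Finset.card_univ, Fintype.card_fin] at this
      omega
    · exact Finset.prod_nonneg fun _ _ => hg0 _
  have hmean : ∑ y, W y * g y ≤ r / 2 := by
    have h1 : ∀ y, W y * g y
        = (r - r⁻¹) * (W y * (if bad y then 1 else 0)) + r⁻¹ * W y := by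
      intro y
      simp only [g]
      split_ifs <;> ring
    simp_rw [h1, Finset.sum_add_distrib, ← Finset.mul_sum, hW1]
    have hinv : r⁻¹ = r / 3 := by
      rw [← hr2]
      field_simp
    have : 0 ≤ r - r⁻¹ := by rw [hinv]; linarith
    have := mul_le_mul_of_nonneg_left hbad this
    rw [hinv] at this ⊢
    linarith
  have hexp : r / 2 ≤ Real.exp (-(1 / 8)) := by
    refine abs_le_of_sq_le_sq' ?_ (Real.exp_pos _).le |>.2
    rw [div_pow, hr2, ← Real.exp_nat_mul]
    have := Real.add_one_le_exp (-(1 / 4) : ℝ)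
    norm_num at this ⊢
    linarith
  calc _ ≤ ∑ η : Fin N → Y, ∏ b, (W (η b) * g (η b)) := by
        refine Finset.sum_le_sum fun η _ => ?_
        rw [Finset.prod_mul_distrib]
        exact mul_le_mul_of_nonneg_left (hpt η) (Finset.prod_nonneg fun _ _ => hW0 _)
    _ = (∑ y, W y * g y) ^ N := by
        rw [← Fintype.prod_sum (fun _ y => W y * g y)]
        simp
    _ ≤ Real.exp (-(1 / 8)) ^ N := by
        gcongr
        · exact Finset.sum_nonneg fun y _ => mul_nonneg (hW0 y) (hg0 y)
        · exact hmean.trans hexp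
    _ = Real.exp (-(N / 8)) := by
        rw [← Real.exp_nat_mul]
        congr 1
        ring

open Classical in
theorem sum_prod_median_collisionEstimate_le {X : Type*} [Fintype X] [DecidableEq X] {N B : ℕ}
    (P : X → ℝ) (hP0 : ∀ q, 0 ≤ P q) (hP1 : ∑ q, P q = 1) (D : ℝ) (hD : 0 < D)
    (hDP : D * ∑ q, P q ^ 2 ≤ 1) (ε : ℝ) (hε : 0 < ε) (hB : 4 * D / ε ^ 2 ≤ B)
    (med : (Fin N → ℝ) → ℝ) (hmed : ∀ x, IsMedian x (med x)) :
    ∑ ω : Fin N × Fin B × Fin 2 → X, (∏ k, P (ω k)) *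
        (if ε ≤ |med (fun b => collisionEstimate D fun k => ω (b, k))
          - (1 - D * ∑ q, P q ^ 2)| then 1 else 0)
      ≤ Real.exp (-(N / 8)) := by
  have hcheb := collisionEstimate_chebyshev P hP0 hP1 D hD hDP ε hε hB
  set c := 1 - D * ∑ q, P q ^ 2 with hc
  rw [sum_prod_curry P (fun η : Fin N → Fin B × Fin 2 → X =>
    if ε ≤ |med (fun b => collisionEstimate D (η b)) - c| then 1 else 0)]
  have hW1 : ∑ y : Fin B × Fin 2 → X, ∏ k, P (y k) = 1 := by
    rw [← Fintype.prod_sum (fun _ a => P a)]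
    simp [hP1]
  have hW0 : ∀ y : Fin B × Fin 2 → X, 0 ≤ ∏ k, P (y k) :=
    fun y => Finset.prod_nonneg fun _ _ => hP0 _
  refine le_trans (Finset.sum_le_sum fun η _ => ?_)
    (sum_prod_majority_le N (fun y : Fin B × Fin 2 → X => ∏ k, P (y k)) hW0 hW1
      (fun y => ε ≤ |collisionEstimate D y - c|) (by convert hcheb))
  refine mul_le_mul_of_nonneg_left ?_ (Finset.prod_nonneg fun _ _ => hW0 _)
  split_ifs with h1 h2
  · exact le_rfl
  · exact absurd ((hmed _).card_le h1) (by convert h2)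
  · exact zero_le_one
  · exact le_rfl

theorem sum_eq_sum_embedIdx {n : ℕ} {M : Type*} [AddCommMonoid M] (α : Finset (Fin n))
    (f : (Fin n → Fin 2) → M) : ∑ x, f x = ∑ i, ∑ k, f (embedIdx α i k) := by
  rw [← Fintype.sum_prod_type']
  exact (Fintype.sum_equiv (Equiv.piEquivPiSubtypeProd (· ∈ α) fun _ => Fin 2).symm _ _
    fun _ => rfl).symm

theorem embedIdx_mem {n : ℕ} (α : Finset (Fin n)) (i : {x : Fin n // x ∈ α} → Fin 2)
    (k : {x : Fin n // x ∉ α} → Fin 2) (a : {x : Fin n // x ∈ α}) :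
    embedIdx α i k a = i a := by
  simp [embedIdx, a.2]

theorem embedIdx_not_mem {n : ℕ} (α : Finset (Fin n)) (i : {x : Fin n // x ∈ α} → Fin 2)
    (k : {x : Fin n // x ∉ α} → Fin 2) (a : {x : Fin n // x ∉ α}) :
    embedIdx α i k a = k a := by
  simp [embedIdx, a.2]

theorem prod_subtype_not_mem {n : ℕ} {M : Type*} [CommMonoid M] (S : Finset (Fin n))
    (f : Fin n → M) : ∏ i : {i : Fin n // i ∉ S}, f i = ∏ i ∈ Sᶜ, f i :=
  (Finset.prod_subtype Sᶜ (by simp) f).symm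

theorem prod_mem_mul_prod_not_mem {n : ℕ} {M : Type*} [CommMonoid M] (S : Finset (Fin n))
    (f : Fin n → M) :
    (∏ i : {i : Fin n // i ∈ S}, f i) * ∏ i : {i : Fin n // i ∉ S}, f i = ∏ i, f i := by
  rw [prod_subtype_not_mem, Finset.prod_coe_sort, Finset.prod_mul_prod_compl]

theorem prod_ite_eq_ite_funext {ι : Type*} [Fintype ι] (x y : ι → Fin 2) :
    ∏ i, (if x i = y i then (1 : ℂ) else 0) = if x = y then 1 else 0 := by
  rw [Finset.prod_ite_zero]
  simp [funext_iff]

theorem sicProj_apply {n : ℕ} (S : Finset (Fin n)) (q : {i : Fin n // i ∈ S} → Fin 4)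
    (x y : Fin n → Fin 2) :
    sicProj S q x y
      = (∏ i : {i : Fin n // i ∈ S}, sicTilde (q i) (x i) * star (sicTilde (q i) (y i)))
      * ∏ i : {i : Fin n // i ∉ S}, if x i = y i then 1 else 0 := by
  rw [sicProj, localOp, ← prod_mem_mul_prod_not_mem S]
  congr 1
  · exact Finset.prod_congr rfl fun i _ => by simp [i.2, Matrix.vecMulVec_apply]
  · exact Finset.prod_congr rfl fun i _ => by simp [i.2]

theorem exists_cube_root_eq_exp : ∃ w : ℂ, Complex.exp (2 * Real.pi * Complex.I / 3) = w ∧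
    Complex.exp (4 * Real.pi * Complex.I / 3) = w ^ 2 ∧ star w = w ^ 2 ∧ w ^ 2 = -1 - w := by
  have h := Complex.isPrimitiveRoot_exp 3 (by norm_num)
  have he : Complex.exp (2 * Real.pi * Complex.I / (3 : ℕ))
      = Complex.exp (2 * Real.pi * Complex.I / 3) := by norm_num
  rw [he] at h
  set w := Complex.exp (2 * Real.pi * Complex.I / 3) with hw
  have h3 : w ^ 3 = 1 := h.pow_eq_one
  have hsum : w ^ 2 = -1 - w := by
    have := h.geom_sum_eq_zero (by norm_num)
    simp [Finset.sum_range_succ] at this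
    linear_combination this
  refine ⟨w, rfl, ?_, ?_, hsum⟩
  · rw [hw, ← Complex.exp_nat_mul]
    congr 1
    push_cast
    ring
  · have hw0 : w ≠ 0 := Complex.exp_ne_zero _
    have h1 : star w * w = 1 := by
      have : ‖w‖ = 1 := h.norm'_eq_one (by norm_num)
      have h2 := Complex.conj_mul' w
      rw [this] at h2
      simpa using h2
    apply mul_right_cancel₀ hw0
    rw [h1, ← h3]
    ring

theorem sicTilde_mul_star : ∃ c w : ℂ, c ^ 2 = 1 / 18 ∧ w ^ 2 = -1 - w ∧
    ∀ i a b, sicTilde i a * star (sicTilde i b)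
      = (![!![1 / 2, 0; 0, 0], !![1 / 6, c; c, 1 / 3], !![1 / 6, c * w ^ 2; c * w, 1 / 3],
          !![1 / 6, c * w; c * w ^ 2, 1 / 3]] i : Matrix (Fin 2) (Fin 2) ℂ) a b := by
  obtain ⟨w, h1, h2, hs, hw⟩ := exists_cube_root_eq_exp
  have h3 : ((Real.sqrt 3 : ℝ) : ℂ) ^ 2 = 3 := by
    rw [← Complex.ofReal_pow, Real.sq_sqrt (by norm_num)]; norm_num
  have h23 : ((Real.sqrt (2 / 3) : ℝ) : ℂ) ^ 2 = 2 / 3 := by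
    rw [← Complex.ofReal_pow, Real.sq_sqrt (by norm_num)]; norm_num
  have hh2 : ((Real.sqrt 2 : ℝ) : ℂ) ^ 2 = 2 := by
    rw [← Complex.ofReal_pow, Real.sq_sqrt (by norm_num)]; norm_num
  have hs' : (starRingEnd ℂ) w = w ^ 2 := hs
  have hw3 : w ^ 3 = 1 := by linear_combination (w - 1) * hw
  generalize hr : ((Real.sqrt 3 : ℝ) : ℂ) = r at h3
  generalize ht : ((Real.sqrt (2 / 3) : ℝ) : ℂ) = t at h23
  generalize hv : ((Real.sqrt 2 : ℝ) : ℂ) = v at hh2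
  have hrc : (starRingEnd ℂ) r = r := by rw [← hr, Complex.conj_ofReal]
  have htc : (starRingEnd ℂ) t = t := by rw [← ht, Complex.conj_ofReal]
  have hvc : (starRingEnd ℂ) v = v := by rw [← hv, Complex.conj_ofReal]
  have hr0 : r ≠ 0 := fun h => by simp [h] at h3
  have hv0 : v ≠ 0 := fun h => by simp [h] at hh2
  refine ⟨t / (2 * r), w, ?_, hw, ?_⟩
  · rw [div_pow, mul_pow, h3, h23]
    norm_num
  · intro i a b
    simp only [sicTilde, hv, sicVec, h1, h2, ht, Complex.ofReal_div, Complex.ofReal_one, hr]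
    fin_cases i <;> fin_cases a <;> fin_cases b <;>
      simp [hrc, htc, hvc, hs'] <;> field_simp <;> grind

theorem sum_sicTilde (a b : Fin 2) :
    ∑ i, sicTilde i a * star (sicTilde i b) = if a = b then 1 else 0 := by
  obtain ⟨c, w, hc, hw, h⟩ := sicTilde_mul_star
  simp_rw [h]
  fin_cases a <;> fin_cases b <;> simp [Fin.sum_univ_four] <;> grind

theorem sum_sicTilde_design (a b c d : Fin 2) :
    ∑ i, sicTilde i a * star (sicTilde i b) * (sicTilde i c * star (sicTilde i d))
      = 1 / 6 * ((if a = d ∧ c = b then 1 else 0) + if a = b ∧ c = d then 1 else 0) := by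
  obtain ⟨c', w, hc, hw, h⟩ := sicTilde_mul_star
  simp_rw [h]
  fin_cases a <;> fin_cases b <;> fin_cases c <;> fin_cases d <;>
    simp [Fin.sum_univ_four] <;> grind

theorem prod_embedIdx_ite {n : ℕ} (S : Finset (Fin n)) (i j : {x : Fin n // x ∈ S} → Fin 2)
    (k l : {x : Fin n // x ∉ S} → Fin 2) :
    (∏ a : {x : Fin n // x ∉ S}, if embedIdx S i k a = embedIdx S j l a then (1 : ℂ) else 0)
      = if k = l then 1 else 0 := by
  simp_rw [embedIdx_not_mem]
  exact prod_ite_eq_ite_funext k l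

theorem trace_mul_sicProj {n : ℕ} (ψ : (Fin n → Fin 2) → ℂ) (S : Finset (Fin n))
    (q : {i : Fin n // i ∈ S} → Fin 4) :
    Matrix.trace (Matrix.vecMulVec ψ (star ψ) * sicProj S q)
      = ((∑ k, Complex.normSq (∑ i, ψ (embedIdx S i k) * ∏ a, star (sicTilde (q a) (i a))) : ℝ)
          : ℂ) := by
  simp only [Matrix.trace, Matrix.diag, Matrix.mul_apply, sicProj_apply, Matrix.vecMulVec_apply]
  simp_rw [sum_eq_sum_embedIdx S, prod_embedIdx_ite, embedIdx_mem]
  push_cast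
  simp_rw [Complex.normSq_eq_conj_mul_self, map_sum, Finset.sum_mul_sum]
  rw [Finset.sum_comm]
  refine Finset.sum_congr rfl fun k _ => ?_
  rw [Finset.sum_comm]
  refine Finset.sum_congr rfl fun i _ => ?_
  refine Finset.sum_congr rfl fun j _ => ?_
  simp only [Finset.prod_mul_distrib, map_prod, map_mul, Pi.star_apply, RCLike.star_def,
    Complex.conj_conj, mul_ite, mul_one, mul_zero, Finset.sum_ite_eq', Finset.mem_univ, if_true]
  ring

theorem sum_trace_mul_sicProj {n : ℕ} (ρ : QMat n) (S : Finset (Fin n)) :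
    ∑ q, Matrix.trace (ρ * sicProj S q) = Matrix.trace ρ := by
  have h : ∑ q, sicProj S q = (1 : QMat n) := by
    ext x y
    rw [Matrix.sum_apply]
    simp_rw [sicProj_apply]
    rw [← Finset.sum_mul, ← Fintype.prod_sum (fun (i : {i : Fin n // i ∈ S}) j =>
      sicTilde j (x i) * star (sicTilde j (y i)))]
    simp_rw [sum_sicTilde]
    rw [prod_mem_mul_prod_not_mem S (fun i => if x i = y i then (1 : ℂ) else 0),
      prod_ite_eq_ite_funext, Matrix.one_apply]
  rw [← Matrix.trace_sum, ← Matrix.mul_sum, h, Matrix.mul_one]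

theorem trace_reduced_sq {n : ℕ} (ρ : QMat n) (α : Finset (Fin n)) :
    Matrix.trace (reduced ρ α * reduced ρ α)
      = ∑ x, ∑ y, ∑ x', ∑ y', ρ x y * ρ x' y' *
        ((∏ a ∈ α, if y a = x' a ∧ y' a = x a then 1 else 0) *
          ∏ a ∈ αᶜ, if y a = x a ∧ y' a = x' a then 1 else 0) := by
  have hand : ∀ {ι : Type} [Fintype ι] (x y x' y' : ι → Fin 2),
      (∏ a, if y a = x' a ∧ y' a = x a then (1 : ℂ) else 0)
        = (if x' = y then 1 else 0) * (if y' = x then 1 else 0) := by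
    intro ι _ x y x' y'
    rw [← prod_ite_eq_ite_funext, ← prod_ite_eq_ite_funext, ← Finset.prod_mul_distrib]
    refine Finset.prod_congr rfl fun a _ => ?_
    simp only [ite_and, eq_comm (a := y a), ite_mul, one_mul, zero_mul]
  simp_rw [← Finset.prod_coe_sort α, ← prod_subtype_not_mem, sum_eq_sum_embedIdx α,
    embedIdx_mem, embedIdx_not_mem]
  simp_rw [hand]
  simp only [mul_ite, mul_one, mul_zero, Finset.sum_ite_irrel, Finset.sum_const_zero,
    Finset.sum_ite_eq, Finset.sum_ite_eq', Finset.mem_univ, if_true]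
  simp only [Matrix.trace, Matrix.diag, Matrix.mul_apply, reduced, Finset.sum_mul_sum]
  exact Finset.sum_congr rfl fun i _ => Finset.sum_comm

theorem sum_sicProj_mul {n : ℕ} (S : Finset (Fin n)) (x y x' y' : Fin n → Fin 2) :
    3 ^ S.card * ∑ q, sicProj S q y x * sicProj S q y' x'
      = (1 / 2) ^ S.card * ∑ α ∈ S.powerset,
        ((∏ a ∈ α, if y a = x' a ∧ y' a = x a then 1 else 0) *
          ∏ a ∈ αᶜ, if y a = x a ∧ y' a = x' a then 1 else 0) := by
  simp_rw [sicProj_apply, mul_mul_mul_comm, ← Finset.prod_mul_distrib]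
  rw [← Finset.sum_mul, ← Fintype.prod_sum (fun (i : {i : Fin n // i ∈ S}) j =>
      sicTilde j (y i) * star (sicTilde j (x i)) * (sicTilde j (y' i) * star (sicTilde j (x' i))))]
  simp_rw [sum_sicTilde_design]
  rw [Finset.prod_coe_sort S (fun i => (1 / 6 : ℂ) * ((if y i = x' i ∧ y' i = x i then 1 else 0)
      + if y i = x i ∧ y' i = x' i then 1 else 0)),
    prod_subtype_not_mem S (fun i => (if y i = x i then (1 : ℂ) else 0) *
      if y' i = x' i then 1 else 0),
    Finset.prod_mul_distrib, Finset.prod_const, Finset.prod_add, ← mul_assoc, ← mul_assoc,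
    ← mul_pow, mul_assoc, Finset.sum_mul]
  congr 1
  · norm_num
  · refine Finset.sum_congr rfl fun α hα => ?_
    have hα' := Finset.mem_powerset.mp hα
    have hU : αᶜ = (S \ α) ∪ Sᶜ := by
      ext i
      have := @hα' i
      simp
      tauto
    have hd : Disjoint (S \ α) Sᶜ :=
      Finset.disjoint_left.mpr fun i hi hi' => by simp at hi hi'; exact hi' hi.1
    rw [hU, Finset.prod_union hd, mul_assoc]
    congr 2
    refine Finset.prod_congr rfl fun i _ => ?_
    rw [ite_and]
    split_ifs <;> simp

theorem sum_trace_sq {n : ℕ} (ρ : QMat n) (S : Finset (Fin n)) :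
    3 ^ S.card * ∑ q, Matrix.trace (ρ * sicProj S q) ^ 2
      = (1 / 2) ^ S.card * ∑ α ∈ S.powerset, Matrix.trace (reduced ρ α * reduced ρ α) := by
  have hL : ∀ q, Matrix.trace (ρ * sicProj S q) ^ 2 = ∑ x, ∑ y, ∑ x', ∑ y',
      ρ x y * ρ x' y' * (sicProj S q y x * sicProj S q y' x') := by
    intro q
    simp only [Matrix.trace, Matrix.diag, Matrix.mul_apply, sq, Finset.sum_mul_sum]
    refine Finset.sum_congr rfl fun x _ => ?_
    rw [Finset.sum_comm]
    simp only [mul_mul_mul_comm]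
  have hswap : ∀ {ι : Type} (s : Finset ι) (F : ι → (Fin n → Fin 2) → (Fin n → Fin 2) →
      (Fin n → Fin 2) → (Fin n → Fin 2) → ℂ), ∑ q ∈ s, ∑ x, ∑ y, ∑ x', ∑ y', F q x y x' y'
        = ∑ x, ∑ y, ∑ x', ∑ y', ∑ q ∈ s, F q x y x' y' := by
    intro ι s F
    rw [Finset.sum_comm]
    refine Finset.sum_congr rfl fun x _ => ?_
    rw [Finset.sum_comm]
    refine Finset.sum_congr rfl fun y _ => ?_
    rw [Finset.sum_comm]
    exact Finset.sum_congr rfl fun x' _ => Finset.sum_comm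
  simp_rw [trace_reduced_sq, hL]
  rw [hswap, hswap]
  simp_rw [← Finset.mul_sum (Finset.univ : Finset ({i : Fin n // i ∈ S} → Fin 4)),
    ← Finset.mul_sum S.powerset]
  simp_rw [Finset.mul_sum (Finset.univ : Finset (Fin n → Fin 2)), mul_left_comm _ (ρ _ _ * ρ _ _),
    sum_sicProj_mul]

theorem trace_reduced_sq_re_le_one {n : ℕ} (ψ : (Fin n → Fin 2) → ℂ)
    (hψ : (∑ x, star (ψ x) * ψ x) = 1) (α : Finset (Fin n)) :
    (Matrix.trace (reduced (Matrix.vecMulVec ψ (star ψ)) α *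
      reduced (Matrix.vecMulVec ψ (star ψ)) α)).re ≤ 1 := by
  set M : ({x : Fin n // x ∈ α} → Fin 2) → ℝ := fun i => ∑ k, ‖ψ (embedIdx α i k)‖ ^ 2 with hM
  have hM1 : ∑ i, M i = 1 := by
    simp_rw [hM, ← sum_eq_sum_embedIdx α fun x => ‖ψ x‖ ^ 2]
    have h : ∀ x, star (ψ x) * ψ x = ((‖ψ x‖ ^ 2 : ℝ) : ℂ) := fun x => by
      simpa using Complex.conj_mul' (ψ x)
    simp_rw [h] at hψ
    exact_mod_cast hψ
  set ρ := Matrix.vecMulVec ψ (star ψ) with hρ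
  have hr : ∀ i j, ‖reduced ρ α i j‖ ≤ ∑ k, ‖ψ (embedIdx α i k)‖ * ‖ψ (embedIdx α j k)‖ := by
    intro i j
    refine (norm_sum_le _ _).trans (le_of_eq (Finset.sum_congr rfl fun k _ => ?_))
    simp [hρ, Matrix.vecMulVec_apply]
  have hrr : ∀ i j, ‖reduced ρ α i j * reduced ρ α j i‖ ≤ M i * M j := by
    intro i j
    rw [norm_mul]
    have hji := hr j i
    simp_rw [mul_comm ‖ψ (embedIdx α j _)‖] at hji
    refine (mul_le_mul (hr i j) hji (norm_nonneg _)
      (Finset.sum_nonneg fun _ _ => by positivity)).trans ?_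
    rw [← sq]
    exact Finset.sum_mul_sq_le_sq_mul_sq _ _ _
  calc _ ≤ ‖Matrix.trace (reduced ρ α * reduced ρ α)‖ := Complex.re_le_norm _
    _ ≤ ∑ i, ∑ j, ‖reduced ρ α i j * reduced ρ α j i‖ := by
        simp only [Matrix.trace, Matrix.diag, Matrix.mul_apply]
        exact (norm_sum_le _ _).trans (Finset.sum_le_sum fun i _ => norm_sum_le _ _)
    _ ≤ ∑ i, ∑ j, M i * M j := Finset.sum_le_sum fun i _ => Finset.sum_le_sum fun j _ => hrr i j
    _ = 1 := by rw [← Finset.sum_mul_sum, hM1, one_mul]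

theorem trace_mul_sicProj_eq_sicBorn {n : ℕ} (ψ : (Fin n → Fin 2) → ℂ) (S : Finset (Fin n))
    (q : {i : Fin n // i ∈ S} → Fin 4) :
    Matrix.trace (Matrix.vecMulVec ψ (star ψ) * sicProj S q)
      = (sicBorn (Matrix.vecMulVec ψ (star ψ)) S q : ℂ) := by
  rw [sicBorn, trace_mul_sicProj, Complex.ofReal_re]

theorem sicBorn_nonneg {n : ℕ} (ψ : (Fin n → Fin 2) → ℂ) (S : Finset (Fin n))
    (q : {i : Fin n // i ∈ S} → Fin 4) : 0 ≤ sicBorn (Matrix.vecMulVec ψ (star ψ)) S q := by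
  rw [sicBorn, trace_mul_sicProj, Complex.ofReal_re]
  exact Finset.sum_nonneg fun _ _ => Complex.normSq_nonneg _

theorem sum_sicBorn {n : ℕ} (ψ : (Fin n → Fin 2) → ℂ)
    (hψ : (∑ x, star (ψ x) * ψ x) = 1) (S : Finset (Fin n)) :
    ∑ q, sicBorn (Matrix.vecMulVec ψ (star ψ)) S q = 1 := by
  have h := sum_trace_mul_sicProj (Matrix.vecMulVec ψ (star ψ)) S
  simp_rw [trace_mul_sicProj_eq_sicBorn] at h
  have ht : Matrix.trace (Matrix.vecMulVec ψ (star ψ)) = 1 := by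
    rw [← hψ]
    exact Finset.sum_congr rfl fun x _ => mul_comm _ _
  rw [ht] at h
  exact_mod_cast h

theorem CE_eq_one_sub_sum_sicBorn_sq {n : ℕ} (ψ : (Fin n → Fin 2) → ℂ) (S : Finset (Fin n)) :
    CE (Matrix.vecMulVec ψ (star ψ)) S
      = 1 - 3 ^ S.card * ∑ q, sicBorn (Matrix.vecMulVec ψ (star ψ)) S q ^ 2 := by
  have h := sum_trace_sq (Matrix.vecMulVec ψ (star ψ)) S
  simp_rw [trace_mul_sicProj_eq_sicBorn] at h
  have h2 : (3 : ℝ) ^ S.card * ∑ q, sicBorn (Matrix.vecMulVec ψ (star ψ)) S q ^ 2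
      = (((3 : ℂ) ^ S.card *
        ∑ q, (sicBorn (Matrix.vecMulVec ψ (star ψ)) S q : ℂ) ^ 2)).re := by
    rw [← Complex.ofReal_re ((3 : ℝ) ^ S.card * _)]
    push_cast
    rfl
  have h3 : ((1 / 2 : ℂ) ^ S.card) = (((1 / 2 : ℝ) ^ S.card : ℝ) : ℂ) := by push_cast; rfl
  rw [h2, h, CE, h3, Complex.re_ofReal_mul, Complex.re_sum]

theorem three_pow_mul_sum_sicBorn_sq_le_one {n : ℕ} (ψ : (Fin n → Fin 2) → ℂ)
    (hψ : (∑ x, star (ψ x) * ψ x) = 1) (S : Finset (Fin n)) :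
    (3 : ℝ) ^ S.card * ∑ q, sicBorn (Matrix.vecMulVec ψ (star ψ)) S q ^ 2 ≤ 1 := by
  have h := CE_eq_one_sub_sum_sicBorn_sq ψ S
  have h1 := Finset.sum_le_sum fun (α : Finset (Fin n)) (_ : α ∈ S.powerset) =>
    trace_reduced_sq_re_le_one ψ hψ α
  have h2 := mul_le_mul_of_nonneg_left h1 (by positivity : (0 : ℝ) ≤ (1 / 2) ^ S.card)
  simp only [Finset.sum_const, Finset.card_powerset, nsmul_eq_mul, mul_one, Nat.cast_pow,
    Nat.cast_ofNat, ← mul_pow] at h2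
  norm_num [CE] at h h2
  linarith

theorem sicMeasure_singleton {n : ℕ} (ρ : QMat n) (S : Finset (Fin n))
    (q : {i : Fin n // i ∈ S} → Fin 4) :
    sicMeasure ρ S {q} = ENNReal.ofReal (sicBorn ρ S q) := by
  rw [sicMeasure, Measure.finsetSum_apply, Finset.sum_eq_single q]
  · simp
  · intro b _ hb
    simp [hb]
  · simp

instance sicMeasure_isFiniteMeasure {n : ℕ} (ρ : QMat n) (S : Finset (Fin n)) :
    IsFiniteMeasure (sicMeasure ρ S) := by
  refine ⟨?_⟩
  rw [sicMeasure, Measure.finsetSum_apply]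
  refine ENNReal.sum_lt_top.mpr fun q _ => ?_
  simp

open Classical in
theorem pi_sicMeasure_apply {n : ℕ} {ι : Type*} [Fintype ι] [DecidableEq ι]
    (ρ : QMat n) (S : Finset (Fin n))
    (h0 : ∀ q, 0 ≤ sicBorn ρ S q) (A : Set (ι → {i : Fin n // i ∈ S} → Fin 4)) :
    Measure.pi (fun _ : ι => sicMeasure ρ S) A
      = ENNReal.ofReal (∑ ω, (∏ k, sicBorn ρ S (ω k)) * if ω ∈ A then 1 else 0) := by
  have hA : A = ((Finset.univ.filter (· ∈ A) : Finset _) : Set _) := by simp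
  conv_lhs => rw [hA, ← sum_measure_singleton]
  simp_rw [mul_ite, mul_one, mul_zero]
  rw [← Finset.sum_filter,
    ENNReal.ofReal_sum_of_nonneg fun _ _ => Finset.prod_nonneg fun _ _ => h0 _]
  refine Finset.sum_congr rfl fun ω _ => ?_
  rw [Measure.pi_singleton, ENNReal.ofReal_prod_of_nonneg fun _ _ => h0 _]
  simp_rw [sicMeasure_singleton]

/-- **CE estimation via SIC data and median-of-means (`K = 2`)**: with `N_B = ⌈8 log(1/δ)⌉`
batches of `B = ⌈4·3^s/ε²⌉` pairs of i.i.d. SIC outcomes, any median of the batch means is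
`ε`-close to `C_ψ(S)` with probability at least `1 - δ`. -/
theorem SIC_MoM_estimator_K2 (n : ℕ) (ψ : (Fin n → Fin 2) → ℂ)
    (hψ : (∑ x, star (ψ x) * ψ x) = 1)
    (S : Finset (Fin n)) (hS : S.Nonempty)
    (ε δ : ℝ) (hε : 0 < ε) (hδ0 : 0 < δ) (hδ1 : δ < 1) (NB B : ℕ)
    (hNB : NB = ⌈8 * Real.log (1 / δ)⌉₊)
    (hB : B = ⌈4 * (3 : ℝ) ^ S.card / ε ^ 2⌉₊)
    (med : (Fin NB → ℝ) → ℝ) (hmed : ∀ x, IsMedian x (med x)) :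
    (Measure.pi fun _ : Fin NB × Fin B × Fin 2 =>
        sicMeasure (Matrix.vecMulVec ψ (star ψ)) S)
      {ω | ε ≤ |med (fun b => 1 - (3 : ℝ) ^ S.card *
              ((1 / (B : ℝ)) * ∑ i : Fin B, if ω (b, i, 0) = ω (b, i, 1) then 1 else 0))
            - CE (Matrix.vecMulVec ψ (star ψ)) S|}
      ≤ ENNReal.ofReal δ := by
  rw [pi_sicMeasure_apply _ _ (sicBorn_nonneg ψ S)]
  refine ENNReal.ofReal_le_ofReal ?_
  have hmain := sum_prod_median_collisionEstimate_le (sicBorn (Matrix.vecMulVec ψ (star ψ)) S)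
    (sicBorn_nonneg ψ S) (sum_sicBorn ψ hψ S) (3 ^ S.card) (by positivity)
    (three_pow_mul_sum_sicBorn_sq_le_one ψ hψ S) ε hε (hB ▸ Nat.le_ceil _) med hmed
  rw [← CE_eq_one_sub_sum_sicBorn_sq] at hmain
  refine (le_of_eq ?_).trans (hmain.trans ?_)
  · refine Finset.sum_congr rfl fun ω _ => ?_
    simp only [Set.mem_ofPred_eq, collisionEstimate]
  · have h1 : 8 * Real.log (1 / δ) ≤ NB := hNB ▸ Nat.le_ceil _
    rw [one_div, Real.log_inv] at h1
    rw [← Real.le_log_iff_exp_le hδ0]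
    linarith
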